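/- arXiv:2407.04462 — 2 statements merged into one kernel-verified Lean document; each statement's English description precedes it below -/
import Mathlib

section
/- Let Q = q_1•⋯•q_n be a generalized subsequence over Σ and let w be a word over Σ. Define the (n+1)×(n+1) integer matrix M(w) by M(w)_{ii} = 1 for all i, M(w)_{i,j+1} = |w|_{q_i•⋯•q_j} for all 1 ≤ i ≤ j ≤ n, and M(w)_{ij} = 0 for i > j. Then every minor of M(w) — the determinant of any square submatrix obtained by selecting equally many rows and columns of M(w) — is a nonnegative integer. -/
/-- Number of occurrences of the generalized subsequence with factor list `Q` in the word `w`.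
The empty sequence of factors has exactly one occurrence in every word. -/
def gsCount {α : Type*} [DecidableEq α] : List (List α) → List α → ℕ
  | [], _ => 1
  | q :: Q, w =>
      ∑ i ∈ Finset.range (w.length + 1 - q.length),
        if (w.drop i).take q.length = q then gsCount Q (w.drop (i + q.length)) else 0

/-- Scattered-subword count `C(w, u)`: the number of occurrences of `u` as a
scattered subword (subsequence) of `w`. -/
def sCount {α : Type*} [DecidableEq α] : List α → List α → ℕ
  | _, [] => 1
  | [], _ :: _ => 0
  | a :: w, b :: u => sCount w (b :: u) + (if a = b then sCount w u else 0)

theorem gsCount_step {α : Type*} [DecidableEq α] (q : List α) (hq : q ≠ []) (Q : List (List α))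
    (u : List α) :
    gsCount (q :: Q) u = gsCount (q :: Q) (u.drop 1) +
      if u.take q.length = q then gsCount Q (u.drop q.length) else 0 := by
  have hq0 : 0 < q.length := List.length_pos_iff.mpr hq
  by_cases h : q.length ≤ u.length
  · obtain ⟨m, hm⟩ : ∃ m, u.length = q.length + m := ⟨u.length - q.length, by omega⟩
    have h1 : u.length + 1 - q.length = m + 1 := by omega
    have h2 : (u.drop 1).length + 1 - q.length = m := by
      rw [List.length_drop]; omega
    rw [gsCount, gsCount, h1, h2, Finset.sum_range_succ']
    congr 1
    · apply Finset.sum_congr rfl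
      intro i _
      rw [List.drop_drop, List.drop_drop, show 1 + i = i + 1 by omega,
        show 1 + (i + q.length) = i + 1 + q.length by omega]
    · simp
  · have h1 : u.length + 1 - q.length = 0 := by omega
    have h2 : (u.drop 1).length + 1 - q.length = 0 := by
      rw [List.length_drop]; omega
    have h3 : ¬ u.take q.length = q := by
      intro hh
      have := congrArg List.length hh
      rw [List.length_take] at this
      omega
    rw [gsCount, gsCount, h1, h2, if_neg h3]
    simp

theorem gsCount_nil_word {α : Type*} [DecidableEq α] (q : List α) (hq : q ≠ [])
    (Q : List (List α)) : gsCount (q :: Q) [] = 0 := by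
  have hq0 : 0 < q.length := List.length_pos_iff.mpr hq
  rw [gsCount, show ([] : List α).length + 1 - q.length = 0 by simp; omega]
  simp

def TNonneg {N : ℕ} (A : Matrix (Fin N) (Fin N) ℤ) : Prop :=
  ∀ (m : ℕ) (r c : Fin m → Fin N), StrictMono r → StrictMono c → 0 ≤ (A.submatrix r c).det

theorem TNonneg_one {N : ℕ} : TNonneg (1 : Matrix (Fin N) (Fin N) ℤ) := by
  intro m r c hr hc
  by_cases h : Set.range r = Set.range c
  · have : r = c := (StrictMono.range_inj hr hc).mp h
    subst this
    rw [Matrix.submatrix_one _ hr.injective]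
    simp
  · by_contra hneg
    apply h
    have hne : ((1 : Matrix (Fin N) (Fin N) ℤ).submatrix r c).det ≠ 0 := by
      intro h0; exact hneg h0.ge
    rw [Matrix.det_apply] at hne
    obtain ⟨σ, -, hσ⟩ := Finset.exists_ne_zero_of_sum_ne_zero hne
    have key : ∀ i, r (σ i) = c i := by
      intro i
      by_contra hi
      apply hσ
      rw [Finset.prod_eq_zero (Finset.mem_univ i), smul_zero]
      simp [Matrix.one_apply, hi]
    ext x
    constructor
    · rintro ⟨i, rfl⟩
      exact ⟨σ.symm i, by rw [← key]; simp⟩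
    · rintro ⟨i, rfl⟩
      exact ⟨σ i, key i⟩

theorem TNonneg_row {N : ℕ} (A B : Matrix (Fin N) (Fin N) ℤ) (hA : TNonneg A)
    (k k' : Fin N) (hk : (k' : ℕ) = k + 1) (x : ℤ) (hx : 0 ≤ x)
    (hB : ∀ i j, i ≠ k → B i j = A i j)
    (hBk : ∀ j, B k j = A k j + x * A k' j) : TNonneg B := by
  intro m r c hr hc
  by_cases h : ∃ a, r a = k
  · obtain ⟨a, ha⟩ := h
    have hne : ∀ b, b ≠ a → r b ≠ k := by
      intro b hb hb'
      exact hb (hr.injective (hb'.trans ha.symm))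
    have e1 : B.submatrix r c = (A.submatrix r c).updateRow a
        ((A.submatrix r c) a + x • (fun j => A k' (c j))) := by
      ext i j
      by_cases hi : i = a
      · subst hi
        simp [ha, hBk]
      · rw [Matrix.updateRow_ne hi]
        simp [hB _ _ (hne i hi)]
    have e2 : (A.submatrix r c).updateRow a (fun j => A k' (c j)) =
        A.submatrix (Function.update r a k') c := by
      ext i j
      by_cases hi : i = a
      · subst hi
        simp
      · rw [Matrix.updateRow_ne hi]
        simp [hi]
    rw [e1, Matrix.det_updateRow_add, Matrix.det_updateRow_smul, Matrix.updateRow_eq_self]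
    apply add_nonneg (hA m r c hr hc)
    apply mul_nonneg hx
    rw [e2]
    by_cases hb : ∃ b, r b = k'
    · obtain ⟨b, hb⟩ := hb
      have hba : b ≠ a := by
        rintro rfl
        rw [hb] at ha
        subst ha
        omega
      rw [Matrix.det_zero_of_row_eq hba]
      funext j
      simp [hba, hb]
    · push Not at hb
      apply hA m _ c _ hc
      intro i j hij
      have hrij := hr hij
      by_cases hi : i = a
      · have hj : j ≠ a := by rintro rfl; exact absurd hij (by simp [hi])
        subst hi
        have := hb j
        simp only [Function.update_self, Function.update_of_ne hj]
        rw [Fin.lt_def] at hrij ⊢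
        rw [Ne, Fin.ext_iff] at this
        rw [ha] at hrij
        omega
      · by_cases hj : j = a
        · subst hj
          simp only [Function.update_self, Function.update_of_ne hi]
          rw [Fin.lt_def] at hrij ⊢
          rw [ha] at hrij
          omega
        · simpa [hi, hj] using hrij
  · push Not at h
    have : B.submatrix r c = A.submatrix r c := by
      ext i j
      simp [hB _ _ (h i)]
    rw [this]
    exact hA m r c hr hc

def frontMat {α : Type*} [DecidableEq α] (Q : List (List α)) (w : List α) (f : ℕ → ℕ) :
    Matrix (Fin (Q.length + 1)) (Fin (Q.length + 1)) ℤ := fun i j =>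
  if i = j then 1
  else if i < j then
    (gsCount ((Q.drop (i : ℕ)).take ((j : ℕ) - (i : ℕ))) (w.drop (f i)) : ℤ)
  else 0

theorem frontMat_congr {α : Type*} [DecidableEq α] (Q : List (List α)) (w : List α)
    (f g : ℕ → ℕ) (h : ∀ i < Q.length, f i = g i) : frontMat Q w f = frontMat Q w g := by
  ext i j
  unfold frontMat
  split_ifs with h1 h2
  · rfl
  · rw [h i (by have := j.2; rw [Fin.lt_def] at h2; omega)]
  · rfl

theorem take_drop_cons {α : Type*} (Q : List α) (i j : ℕ) (hi : i < Q.length) (hij : i < j) :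
    (Q.drop i).take (j - i) = Q[i] :: (Q.drop (i + 1)).take (j - (i + 1)) := by
  rw [List.drop_eq_getElem_cons hi, show j - i = (j - (i + 1)) + 1 by omega, List.take_succ_cons]

theorem frontMat_step {α : Type*} [DecidableEq α] (Q : List (List α)) (w : List α)
    (hQ' : ∀ q ∈ Q, q ≠ []) (f g : ℕ → ℕ) (k : ℕ) (hk : k < Q.length)
    (hfg : ∀ i, i ≠ k → g i = f i) (h1 : f k = g k + 1) (h2 : f (k + 1) = g k + Q[k].length)
    (hf : TNonneg (frontMat Q w f)) : TNonneg (frontMat Q w g) := by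
  refine TNonneg_row _ _ hf ⟨k, by omega⟩ ⟨k + 1, by omega⟩ rfl
    (if (w.drop (g k)).take Q[k].length = Q[k] then 1 else 0) (by split_ifs <;> simp) ?_ ?_
  · intro i j hi
    unfold frontMat
    rw [hfg i (fun h => hi (Fin.ext h))]
  · intro j
    have hq : Q[k] ≠ [] := hQ' _ (List.getElem_mem hk)
    unfold frontMat
    simp only [Fin.ext_iff, Fin.lt_def]
    rcases lt_trichotomy k (j : ℕ) with hj | hj | hj
    · rw [if_neg hj.ne, if_pos hj, if_neg hj.ne, if_pos hj, take_drop_cons Q k j hk hj,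
        gsCount_step _ hq, List.drop_drop, List.drop_drop, ← h1, ← h2]
      by_cases hj' : k + 1 = (j : ℕ)
      · simp [← hj', gsCount]
      · have : k + 1 < (j : ℕ) := by omega
        simp [hj', this]
    · have : ¬ (k + 1 = (j : ℕ)) := by omega
      have : ¬ (k + 1 < (j : ℕ)) := by omega
      simp [*]
    · have : ¬ (k + 1 = (j : ℕ)) := by omega
      have : ¬ (k + 1 < (j : ℕ)) := by omega
      have : ¬ (k = (j : ℕ)) := by omega
      have : ¬ (k < (j : ℕ)) := by omega
      simp [*]

theorem frontMat_init {α : Type*} [DecidableEq α] (Q : List (List α)) (w : List α)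
    (hQ' : ∀ q ∈ Q, q ≠ []) (f : ℕ → ℕ) (hf : ∀ i, w.length ≤ f i) :
    frontMat Q w f = 1 := by
  ext i j
  unfold frontMat
  rw [Matrix.one_apply]
  split_ifs with h1 h2
  · rfl
  · rw [Fin.lt_def] at h2
    have hi : (i : ℕ) < Q.length := by have := j.2; omega
    rw [take_drop_cons Q i j hi h2, List.drop_eq_nil_of_le (hf _),
      gsCount_nil_word _ (hQ' _ (List.getElem_mem hi))]
    rfl
  · rfl

theorem frontMat_TN {α : Type*} [DecidableEq α] (Q : List (List α)) (w : List α)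
    (hQ' : ∀ q ∈ Q, q ≠ []) : TNonneg (frontMat Q w (fun _ => 0)) := by
  let L : ℕ → ℕ := fun i => ((Q.take i).map List.length).sum
  have hLs : ∀ k (hk : k < Q.length), L (k + 1) = L k + Q[k].length := by
    intro k hk
    simp only [L]
    rw [List.take_succ_eq_append_getElem hk, List.map_append, List.sum_append]
    simp only [List.map_cons, List.map_nil, List.sum_cons, List.sum_nil, add_zero]
  have hLm : ∀ i, i ≤ Q.length → L i ≤ L Q.length := by
    intro i hi
    induction hi using Nat.decreasingInduction with
    | self => exact le_rfl
    | of_succ k hk ih => have := hLs k hk; omega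
  have main : ∀ t, t ≤ w.length + L Q.length →
      TNonneg (frontMat Q w (fun i => t + L i - L Q.length)) := by
    intro t ht
    induction ht using Nat.decreasingInduction with
    | self =>
      rw [frontMat_init Q w hQ' _ (fun i => by omega)]
      exact TNonneg_one
    | of_succ t ht ih =>
      have inner : ∀ s, s ≤ Q.length →
          TNonneg (frontMat Q w (fun i => (if s ≤ i then t else t + 1) + L i - L Q.length)) := by
        intro s hs
        induction hs using Nat.decreasingInduction with
        | self =>
          rw [frontMat_congr Q w _ (fun i => t + 1 + L i - L Q.length)]
          · exact ih
          · intro i hi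
            rw [if_neg (by omega)]
        | of_succ k hk ih2 =>
          have hL := hLs k hk
          by_cases hc : L Q.length ≤ t + L k
          · refine frontMat_step Q w hQ' _ _ k hk ?_ ?_ ?_ ih2
            · intro i hi
              split_ifs <;> omega
            · split_ifs <;> omega
            · split_ifs <;> omega
          · rw [frontMat_congr Q w _
              (fun i => (if k + 1 ≤ i then t else t + 1) + L i - L Q.length)]
            · exact ih2
            · intro i hi
              by_cases hik : i = k
              · subst hik
                split_ifs <;> omega
              · split_ifs <;> omega
      simpa using inner 0 (Nat.zero_le _)
  have h0 := main 0 (Nat.zero_le _)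
  rw [frontMat_congr Q w _ (fun _ => 0)] at h0
  · exact h0
  · intro i hi
    have := hLm i hi.le
    omega

theorem stmt6 {α : Type*} [Fintype α] [DecidableEq α]
    (Q : List (List α)) (hQ : Q ≠ []) (hQ' : ∀ q ∈ Q, q ≠ [])
    (w : List α)
    (M : Matrix (Fin (Q.length + 1)) (Fin (Q.length + 1)) ℤ)
    (hM : ∀ i j : Fin (Q.length + 1),
      M i j =
        if i = j then 1
        else if i < j then (gsCount ((Q.drop (i : ℕ)).take ((j : ℕ) - (i : ℕ))) w : ℤ)
        else 0)
    (m : ℕ) (r c : Fin m → Fin (Q.length + 1))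
    (hr : StrictMono r) (hc : StrictMono c) :
    0 ≤ (M.submatrix r c).det := by
  have : M = frontMat Q w (fun _ => 0) := by
    ext i j
    rw [hM, frontMat, List.drop_zero]
  rw [this]
  exact frontMat_TN Q w hQ' m r c hr hc
end

section
/- Let Q_1 = p_1•⋯•p_m and Q_2 = q_1•⋯•q_s be generalized subsequences over Σ such that no letter of Σ occurs both in some factor p_i and in some factor q_j (Q_1 and Q_2 are disjoint). Then for every word w over Σ: |w|_{Q_1} · |w|_{Q_2} = Σ_{X ∈ Q_1⧢Q_2} |w|_X, where the sum ranges over the ground shuffle of Q_1 and Q_2. -/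
/-- All interleavings (ground shuffle) of two sequences, each interleaving appearing
once for each choice of which positions come from the first sequence. -/
def shuffles {β : Type*} : List β → List β → List (List β)
  | [], ys => [ys]
  | x :: xs, [] => [x :: xs]
  | x :: xs, y :: ys =>
      ((shuffles xs (y :: ys)).map fun z => x :: z) ++
      ((shuffles (x :: xs) ys).map fun z => y :: z)
termination_by xs ys => xs.length + ys.length

theorem gs_nil {α : Type*} [DecidableEq α] (q : List α) (Q : List (List α)) (hq : q ≠ []) :
    gsCount (q :: Q) [] = 0 := by
  cases q with
  | nil => exact absurd rfl hq
  | cons b q => simp [gsCount]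

theorem gs_cons {α : Type*} [DecidableEq α] (q : List α) (Q : List (List α)) (hq : q ≠ [])
    (a : α) (w : List α) :
    gsCount (q :: Q) (a :: w) =
      (if (a :: w).take q.length = q then gsCount Q ((a :: w).drop q.length) else 0)
        + gsCount (q :: Q) w := by
  have hpos : 0 < q.length := List.length_pos_iff.mpr hq
  rw [gsCount, gsCount]
  by_cases hle : q.length ≤ w.length + 1
  · have e : (a :: w).length + 1 - q.length = (w.length + 1 - q.length) + 1 := by
      simp only [List.length_cons]; omega
    rw [e, Finset.sum_range_succ', add_comm]
    congr 1
    · simp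
    · apply Finset.sum_congr rfl
      intro i _
      have e2 : i + 1 + q.length = (i + q.length) + 1 := by omega
      rw [e2, List.drop_succ_cons, List.drop_succ_cons]
  · have e : (a :: w).length + 1 - q.length = 0 := by
      simp only [List.length_cons]; omega
    have e' : w.length + 1 - q.length = 0 := by omega
    rw [e, e', if_neg]
    · simp
    · intro h
      have := congrArg List.length h
      simp only [List.length_take, List.length_cons] at this
      omega

theorem gs_append {α : Type*} [DecidableEq α] (q : List α) (Q : List (List α)) (hq : q ≠ [])
    (u v : List α) (hd : ∀ x ∈ u, x ∉ q) :
    gsCount (q :: Q) (u ++ v) = gsCount (q :: Q) v := by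
  induction u with
  | nil => rfl
  | cons a u ih =>
    rw [List.cons_append, gs_cons q Q hq, if_neg, zero_add]
    · exact ih fun x hx => hd x (List.mem_cons_of_mem _ hx)
    · intro h
      apply hd a List.mem_cons_self
      cases q with
      | nil => exact absurd rfl hq
      | cons b q =>
        simp only [List.length_cons, List.take_succ_cons, List.cons.injEq] at h
        simp [h.1]

theorem gs_map_nil {α : Type*} [DecidableEq α] (q : List α) (hq : q ≠ [])
    (L : List (List (List α))) :
    (L.map fun X => gsCount (q :: X) []).sum = 0 := by
  induction L with
  | nil => rfl
  | cons X L ih => simp only [List.map_cons, List.sum_cons, ih, gs_nil q X hq]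

theorem gs_map_cons {α : Type*} [DecidableEq α] (q : List α) (hq : q ≠ []) (a : α) (w : List α)
    (L : List (List (List α))) :
    (L.map fun X => gsCount (q :: X) (a :: w)).sum =
      (if (a :: w).take q.length = q then
        (L.map fun X => gsCount X ((a :: w).drop q.length)).sum else 0)
        + (L.map fun X => gsCount (q :: X) w).sum := by
  induction L with
  | nil => simp
  | cons X L ih =>
    simp only [List.map_cons, List.sum_cons, ih, gs_cons q X hq]
    split_ifs <;> ring

theorem gs_main {α : Type*} [DecidableEq α] (n : ℕ) : ∀ (w : List α), w.length ≤ n →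
    ∀ (Q1 Q2 : List (List α)) (_ : ∀ q ∈ Q1, q ≠ []) (_ : ∀ q ∈ Q2, q ≠ [])
    (_ : ∀ x : α, (∃ p ∈ Q1, x ∈ p) → (∃ q ∈ Q2, x ∈ q) → False),
    gsCount Q1 w * gsCount Q2 w =
      ((shuffles Q1 Q2).map fun X => gsCount X w).sum := by
  induction n with
  | zero =>
    intro w hw Q1 Q2 h1 h2 hd
    have : w = [] := List.length_eq_zero_iff.mp (by omega)
    subst this
    match Q1, Q2 with
    | [], Q2 => simp [shuffles, gsCount]
    | p :: P, [] => simp [shuffles, gsCount]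
    | p :: P, q :: R =>
      have hp := h1 p List.mem_cons_self
      have hq := h2 q List.mem_cons_self
      rw [shuffles, List.map_append, List.sum_append, List.map_map, List.map_map]
      simp only [Function.comp_def]
      rw [gs_map_nil p hp, gs_map_nil q hq, gs_nil p P hp]; simp
  | succ n ih =>
    intro w hw Q1 Q2 h1 h2 hd
    match Q1, Q2, w with
    | [], Q2, w => simp [shuffles, gsCount]
    | p :: P, [], w => simp [shuffles, gsCount]
    | p :: P, q :: R, [] => exact ih [] (by simp) _ _ h1 h2 hd
    | p :: P, q :: R, a :: w =>
      have hp := h1 p List.mem_cons_self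
      have hq := h2 q List.mem_cons_self
      have hpl : 0 < p.length := List.length_pos_iff.mpr hp
      have hql : 0 < q.length := List.length_pos_iff.mpr hq
      have hw' : w.length ≤ n := by simpa using hw
      have hdpq : ∀ x ∈ p, x ∉ q := fun x hx hx' =>
        hd x ⟨p, List.mem_cons_self, hx⟩ ⟨q, List.mem_cons_self, hx'⟩
      have I0 := ih w hw' _ _ h1 h2 hd
      have I1 := ih ((a :: w).drop p.length)
        (by simp only [List.length_drop, List.length_cons]; omega) P (q :: R)
        (fun x hx => h1 x (List.mem_cons_of_mem _ hx)) h2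
        (fun x ⟨y, hy, hxy⟩ hx => hd x ⟨y, List.mem_cons_of_mem _ hy, hxy⟩ hx)
      have I2 := ih ((a :: w).drop q.length)
        (by simp only [List.length_drop, List.length_cons]; omega) (p :: P) R
        h1 (fun x hx => h2 x (List.mem_cons_of_mem _ hx))
        (fun x hx ⟨y, hy, hxy⟩ => hd x hx ⟨y, List.mem_cons_of_mem _ hy, hxy⟩)
      rw [shuffles, List.map_append, List.sum_append, List.map_map, List.map_map] at I0 ⊢
      simp only [Function.comp_def] at I0 ⊢
      rw [gs_map_cons p hp, gs_map_cons q hq, ← I1, ← I2]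
      have mem_of : ∀ r : List α, r ≠ [] → (a :: w).take r.length = r → a ∈ r := by
        intro r hr h
        cases r with
        | nil => exact absurd rfl hr
        | cons b r =>
          simp only [List.length_cons, List.take_succ_cons, List.cons.injEq] at h
          simp [h.1]
      by_cases cp : (a :: w).take p.length = p
      · have cq : ¬ (a :: w).take q.length = q := fun cq =>
          hdpq a (mem_of p hp cp) (mem_of q hq cq)
        have e1 : gsCount (q :: R) (a :: w) = gsCount (q :: R) ((a :: w).drop p.length) := by
          conv_lhs => rw [← List.take_append_drop p.length (a :: w), cp]
          exact gs_append q R hq p _ hdpq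
        have e2 := gs_cons q R hq a w
        rw [if_neg cq, zero_add] at e2
        rw [gs_cons p P hp, if_pos cp, if_pos cp, if_neg cq, ← e1, e2, add_mul, I0]
        ring
      · by_cases cq : (a :: w).take q.length = q
        · have e1 : gsCount (p :: P) (a :: w) = gsCount (p :: P) ((a :: w).drop q.length) := by
            conv_lhs => rw [← List.take_append_drop q.length (a :: w), cq]
            exact gs_append p P hp q _ fun x hx hx' => hdpq x hx' hx
          have e2 := gs_cons p P hp a w
          rw [if_neg cp, zero_add] at e2
          rw [gs_cons q R hq, if_pos cq, if_pos cq, if_neg cp, ← e1, e2, mul_add, I0]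
          ring
        · rw [gs_cons p P hp, gs_cons q R hq, if_neg cp, if_neg cq, if_neg cp, if_neg cq]
          simp only [zero_add]
          exact I0

theorem stmt10 {α : Type*} [Fintype α] [DecidableEq α]
    (Q1 Q2 : List (List α))
    (h1 : Q1 ≠ []) (h1' : ∀ q ∈ Q1, q ≠ [])
    (h2 : Q2 ≠ []) (h2' : ∀ q ∈ Q2, q ≠ [])
    (hdisj : ∀ x : α, (∃ p ∈ Q1, x ∈ p) → (∃ q ∈ Q2, x ∈ q) → False)
    (w : List α) :
    gsCount Q1 w * gsCount Q2 w =
      ((shuffles Q1 Q2).map fun X => gsCount X w).sum := by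
  exact gs_main w.length w le_rfl Q1 Q2 h1' h2' hdisj
end
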